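/- Let R be a polynomial in M variables with real nonnegative coefficients and let ξ = (ξ_1, …, ξ_M) be a vector of positive rational numbers. Let L be the set of positive integers ℓ with ξ_r ℓ ∈ ℤ for all r and Coeff[R^ℓ, x_1^{ξ_1 ℓ} ⋯ x_M^{ξ_M ℓ}] > 0, and assume L is nonempty. Suppose x_0 = (x_{0,1}, …, x_{0,M}) is a vector of strictly positive reals satisfying x_{0,r} · ∂R/∂x_r(x_0) = ξ_r · R(x_0) for each r = 1, …, M. Then the limit, as ℓ → ∞ along ℓ ∈ L, of (1/ℓ) · log Coeff[R^ℓ, x_1^{ξ_1 ℓ} ⋯ x_M^{ξ_M ℓ}] exists and equals log R(x_0) − Σ_{r=1}^M ξ_r log x_{0,r}. -/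

import Mathlib

open MvPolynomial Filter

/-!
Fix `ℓ ∈ L`. Since `R ^ ℓ` has nonnegative coefficients, a single term of it is at most
`R(x₀) ^ ℓ` at `x₀`, so `log R(x₀) - ∑ ξ_r log x₀_r` bounds `(1/ℓ) log Coeff[R^ℓ, x^{ξℓ}]` from
above. The logarithms of these coefficients are superadditive along `L`, so by Fekete's argument
the limit is the supremum, and it suffices to come arbitrarily close to the bound for some `ℓ`.
The terms `c_d x₀^d / R(x₀)` of `R(x₀)` form a probability vector, whose mean is `ξ` by the
equations for `x₀`. Applying to it a `ℚ`-linear map `ℝ → ℚ` that is pointwise close to the identity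
gives rational weights with exactly the same total mass and mean; by Stirling's formula the
multinomial term with these weights grows at a rate close to the bound.
-/

open scoped Topology

section RationalApproximation

theorem exists_seq_ratLinearMap_tendsto :
    ∃ g : ℕ → ℝ →ₗ[ℚ] ℚ, ∀ x, Tendsto (fun t => (g t x : ℝ)) atTop (𝓝 x) := by
  let b := Module.Free.chooseBasis ℚ ℝ
  choose e _ _ he using fun x : ℝ => Real.exists_seq_rat_strictMono_tendsto x
  refine ⟨fun t => b.constr ℚ fun j => e (b j) t, fun x => ?_⟩
  have hx : ∑ j ∈ (b.repr x).support, (b.repr x j : ℝ) * b j = x := by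
    simpa [Finsupp.linearCombination_apply, Finsupp.sum, Rat.smul_def]
      using b.linearCombination_repr x
  have hg : ∀ t, ((b.constr ℚ fun j => e (b j) t) x : ℝ) =
      ∑ j ∈ (b.repr x).support, (b.repr x j : ℝ) * e (b j) t := fun t => by
    simp [Module.Basis.constr_apply, Finsupp.sum]
  simp_rw [hg]
  conv => enter [3]; rw [← hx]
  exact tendsto_finsetSum _ fun j _ => (he (b j)).const_mul _

theorem exists_seq_ratLinearMap_tendsto_of_ratCast_eq :
    ∃ f : ℕ → ℝ →ₗ[ℚ] ℚ, (∀ t (q : ℚ), f t q = q) ∧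
      ∀ x, Tendsto (fun t => (f t x : ℝ)) atTop (𝓝 x) := by
  obtain ⟨g, hg⟩ := exists_seq_ratLinearMap_tendsto
  obtain ⟨π, hπ⟩ := (Algebra.linearMap ℚ ℝ).exists_leftInverse_of_injective
    (LinearMap.ker_eq_bot.2 Rat.cast_injective)
  have map_ratCast : ∀ (h : ℝ →ₗ[ℚ] ℚ) (q : ℚ), h q = q * h 1 := fun h q => by
    simpa [Rat.smul_def] using h.map_smul q 1
  have hπ1 : π 1 = 1 := by simpa using LinearMap.congr_fun hπ 1
  refine ⟨fun t => g t + (1 - g t 1) • π, fun t q => ?_, fun x => ?_⟩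
  · simp [map_ratCast _ q, hπ1]
  · simpa using (hg x).add (((hg 1).const_sub 1).mul_const (π x : ℝ))

theorem exists_rat_mem_nhds_of_nonneg {ι : Type*} [Fintype ι] {p : ι → ℝ} (hp : 0 ≤ p)
    {U : Set (ι → ℝ)} (hU : U ∈ 𝓝 p) :
    ∃ w : ι → ℚ, 0 ≤ w ∧ (fun i => (w i : ℝ)) ∈ U ∧
      ∀ (a : ι → ℚ) (q : ℚ), ∑ i, a i * p i = q → ∑ i, a i * w i = q := by
  obtain ⟨f, hf, hlim⟩ := exists_seq_ratLinearMap_tendsto_of_ratCast_eq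
  have hnonneg : ∀ᶠ t in atTop, ∀ i, 0 ≤ f t (p i) := eventually_all.2 fun i => by
    rcases (hp i).eq_or_lt with hi | hi
    · simp [← hi]
    · filter_upwards [(hlim (p i)).eventually_const_lt hi] with t ht
      exact Rat.cast_nonneg.1 ht.le
  obtain ⟨t, ht0, htU⟩ :=
    (hnonneg.and ((tendsto_pi_nhds.2 fun i => hlim (p i)).eventually hU)).exists
  refine ⟨fun i => f t (p i), ht0, htU, fun a q h => ?_⟩
  rw [← hf t q, ← h, map_sum]
  refine Finset.sum_congr rfl fun i _ => ?_
  rw [← Rat.smul_def, map_smul, smul_eq_mul]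

theorem exists_nat_eq_mul_of_rat_nonneg {ι : Type*} [Finite ι] {w : ι → ℚ} (hw : 0 ≤ w) :
    ∃ D : ℕ, 0 < D ∧ ∃ n : ι → ℕ, ∀ i, (n i : ℚ) = D * w i := by
  obtain ⟨D, hD⟩ := IsLocalization.exist_integer_multiples_of_finite (nonZeroDivisors ℤ) w
  choose z hz using hD
  refine ⟨(D : ℤ).natAbs, Int.natAbs_pos.2 (nonZeroDivisors.coe_ne_zero D),
    fun i => (z i).natAbs, fun i => ?_⟩
  have hzi : (z i : ℚ) = (D : ℤ) * w i := by simpa using hz i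
  rw [Nat.cast_natAbs, Nat.cast_natAbs, Int.cast_abs, Int.cast_abs, hzi, abs_mul,
    abs_of_nonneg (hw i)]

end RationalApproximation

section Superadditive

theorem add_mul_mem_and_le_of_superadditiveOn {L : Set ℕ} {u : ℕ → ℝ}
    (hL : ∀ a ∈ L, ∀ b ∈ L, a + b ∈ L) (hu : ∀ a ∈ L, ∀ b ∈ L, u a + u b ≤ u (a + b)) {a b : ℕ}
    (ha : a ∈ L) (hb : b ∈ L) (q : ℕ) :
    a + q * b ∈ L ∧ u a + q * u b ≤ u (a + q * b) := by
  induction q with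
  | zero => simpa using ha
  | succ q ih =>
    have hq : a + (q + 1) * b = a + q * b + b := by ring
    rw [hq]
    refine ⟨hL _ ih.1 b hb, ?_⟩
    push_cast
    linarith [ih.2, hu _ ih.1 b hb]

theorem eventually_pos_of_superadditiveOn {L : Set ℕ} {u : ℕ → ℝ}
    (hL : ∀ a ∈ L, ∀ b ∈ L, a + b ∈ L) (hu : ∀ a ∈ L, ∀ b ∈ L, u a + u b ≤ u (a + b))
    {m : ℕ} (hm : m ∈ L) (hm0 : m ≠ 0) (hum : 0 < u m) :
    ∀ᶠ ℓ in atTop, ℓ ∈ L → 0 < u ℓ := by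
  refine .atTop_of_arithmetic hm0 fun r _ => ?_
  by_cases hr : ∃ j, m * j + r ∈ L
  · obtain ⟨j, hj⟩ := hr
    have hlim : Tendsto (fun q : ℕ => u (m * j + r) + q * u m) atTop atTop :=
      tendsto_atTop_add_const_left _ _ (tendsto_natCast_atTop_atTop.atTop_mul_const hum)
    filter_upwards [(tendsto_sub_atTop_nat j).eventually (hlim.eventually_gt_atTop 0),
      eventually_ge_atTop j] with k hk hjk _
    have hkj : m * k + r = m * j + r + (k - j) * m := by
      obtain ⟨i, rfl⟩ := Nat.exists_eq_add_of_le hjk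
      rw [Nat.add_sub_cancel_left]
      ring
    rw [hkj]
    exact hk.trans_le (add_mul_mem_and_le_of_superadditiveOn hL hu hj hm (k - j)).2
  · exact .of_forall fun k hk => absurd ⟨k, hk⟩ hr

theorem tendsto_div_of_superadditiveOn {L : Set ℕ} {u : ℕ → ℝ} (h0 : 0 ∉ L)
    (hL : ∀ a ∈ L, ∀ b ∈ L, a + b ∈ L) (hu : ∀ a ∈ L, ∀ b ∈ L, u a + u b ≤ u (a + b)) {T : ℝ}
    (hT : IsLUB ((fun ℓ => u ℓ / ℓ) '' L) T) :
    Tendsto (fun ℓ => u ℓ / ℓ) (atTop ⊓ 𝓟 L) (𝓝 T) := by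
  have hpos : ∀ ℓ ∈ L, (0 : ℝ) < ℓ := fun ℓ hℓ =>
    Nat.cast_pos.2 (Nat.pos_of_ne_zero (ne_of_mem_of_not_mem hℓ h0))
  refine tendsto_order.2 ⟨fun a ha => ?_, fun a ha => ?_⟩ <;> rw [eventually_inf_principal]
  · obtain ⟨_, ⟨m, hm, rfl⟩, ham⟩ := (lt_isLUB_iff hT).1 ha
    have hgrowth : ∀ᶠ ℓ in atTop, ℓ ∈ L → 0 < u ℓ - a * ℓ := by
      refine eventually_pos_of_superadditiveOn hL (fun b hb c hc => ?_) hm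
        (ne_of_mem_of_not_mem hm h0) (sub_pos.2 ((lt_div_iff₀ (hpos m hm)).1 ham))
      push_cast
      linarith [hu b hb c hc]
    filter_upwards [hgrowth] with ℓ hℓ hℓL
    exact (lt_div_iff₀ (hpos ℓ hℓL)).2 (sub_pos.1 (hℓ hℓL))
  · exact .of_forall fun ℓ hℓ => (hT.1 ⟨ℓ, hℓ, rfl⟩).trans_lt ha

end Superadditive

section Entropy

theorem isLittleO_log_factorial_sub :
    (fun n : ℕ => Real.log n.factorial - (n * Real.log n - n)) =o[atTop] (fun n => (n : ℝ)) := by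
  have hstirling : (fun n : ℕ => Real.log (Stirling.stirlingSeq n)) =o[atTop] (fun n => (n : ℝ)) :=
    ((Stirling.tendsto_stirlingSeq_sqrt_pi.log (by positivity)).isBigO_one ℝ).trans_isLittleO
      ((Asymptotics.isLittleO_const_id_atTop (1 : ℝ)).comp_tendsto tendsto_natCast_atTop_atTop)
  have hlog : (fun n : ℕ => Real.log n) =o[atTop] (fun n => (n : ℝ)) :=
    Real.isLittleO_log_id_atTop.comp_tendsto tendsto_natCast_atTop_atTop
  have htwo : (fun _ : ℕ => Real.log 2) =o[atTop] (fun n => (n : ℝ)) :=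
    (Asymptotics.isLittleO_const_id_atTop _).comp_tendsto tendsto_natCast_atTop_atTop
  refine (hstirling.add ((hlog.add htwo).const_mul_left (1 / 2))).congr' ?_ .rfl
  filter_upwards [eventually_gt_atTop 0] with n hn
  have hn' : (n : ℝ) ≠ 0 := by positivity
  rw [Stirling.log_stirlingSeq_formula, Real.log_mul two_ne_zero hn',
    Real.log_div hn' (Real.exp_ne_zero 1), Real.log_exp]
  ring

theorem tendsto_log_factorial_mul_div_sub (a : ℕ) :
    Tendsto (fun k : ℕ => Real.log (k * a).factorial / k - a * (Real.log k - 1)) atTop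
      (𝓝 (-Real.negMulLog a)) := by
  rcases a.eq_zero_or_pos with rfl | ha
  · simp
  have hlim := ((isLittleO_log_factorial_sub.tendsto_div_nhds_zero.comp
    (tendsto_id.atTop_mul_const' ha)).const_mul (a : ℝ)).add_const (-Real.negMulLog a)
  rw [mul_zero, zero_add] at hlim
  refine hlim.congr' ?_
  filter_upwards [eventually_gt_atTop 0] with k hk
  have hk' : (k : ℝ) ≠ 0 := by positivity
  have ha' : (a : ℝ) ≠ 0 := by positivity
  simp only [Function.comp_apply, id_eq, Nat.cast_mul, Real.negMulLog, Real.log_mul hk' ha']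
  field_simp
  ring

theorem log_multinomial {ι : Type*} (s : Finset ι) (n : ι → ℕ) :
    Real.log (Nat.multinomial s n) =
      Real.log (∑ i ∈ s, n i).factorial - ∑ i ∈ s, Real.log (n i).factorial := by
  rw [← Nat.multinomial_spec s n, Nat.cast_mul, Nat.cast_prod, Real.log_mul, Real.log_prod]
  · ring
  · exact fun i _ => by positivity
  · exact Finset.prod_ne_zero_iff.2 fun i _ => by positivity
  · exact_mod_cast (Nat.multinomial_pos s n).ne'

theorem tendsto_log_multinomial_div {ι : Type*} (s : Finset ι) (n : ι → ℕ) :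
    Tendsto (fun k : ℕ => Real.log (Nat.multinomial s fun i => k * n i) / k) atTop
      (𝓝 (∑ i ∈ s, Real.negMulLog (n i) - Real.negMulLog (∑ i ∈ s, n i : ℕ))) := by
  have hlim := (tendsto_log_factorial_mul_div_sub (∑ i ∈ s, n i)).sub
    (tendsto_finsetSum s fun i _ => tendsto_log_factorial_mul_div_sub (n i))
  rw [Finset.sum_neg_distrib, neg_sub_neg] at hlim
  refine hlim.congr fun k => ?_
  rw [log_multinomial, ← Finset.mul_sum, Finset.sum_sub_distrib, ← Finset.sum_mul,
    ← Finset.sum_div]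
  push_cast
  ring

variable {ι : Type*} [Fintype ι]

/-- The Gibbs functional `∑ i, (p i * log (c i) - p i * log (p i))` of the weights `p` with respect
to the coefficients `c`. For natural weights `n` it is, up to the entropy of `∑ i, n i`, the
exponential growth rate of the multinomial term `multinomial (k n) * ∏ i, c i ^ (k * n i)`. -/
noncomputable def gibbsFunctional (c p : ι → ℝ) : ℝ :=
  ∑ i, (p i * Real.log (c i) + Real.negMulLog (p i))

theorem continuous_gibbsFunctional (c : ι → ℝ) : Continuous (gibbsFunctional c) := by
  unfold gibbsFunctional
  fun_prop

theorem gibbsFunctional_const_mul (c p : ι → ℝ) (a : ℝ) :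
    gibbsFunctional c (fun i => a * p i) =
      a * gibbsFunctional c p + (∑ i, p i) * Real.negMulLog a := by
  simp only [gibbsFunctional, Real.negMulLog_mul, Finset.mul_sum, Finset.sum_mul,
    ← Finset.sum_add_distrib]
  exact Finset.sum_congr rfl fun i _ => by ring

theorem tendsto_log_multinomial_mul_prod_pow_div {c : ι → ℝ} (hc : ∀ i, 0 < c i) (n : ι → ℕ) :
    Tendsto (fun k : ℕ => Real.log
        (Nat.multinomial Finset.univ (fun i => k * n i) * ∏ i, c i ^ (k * n i)) / k) atTop
      (𝓝 (gibbsFunctional c (fun i => n i) - Real.negMulLog (∑ i, n i : ℕ))) := by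
  have hlim := (tendsto_log_multinomial_div Finset.univ n).const_add (∑ i, n i * Real.log (c i))
  rw [← add_sub_assoc, ← Finset.sum_add_distrib] at hlim
  refine hlim.congr' ?_
  filter_upwards [eventually_gt_atTop 0] with k hk
  have hk' : (k : ℝ) ≠ 0 := by positivity
  have hprod : Real.log (∏ i, c i ^ (k * n i)) = k * ∑ i, n i * Real.log (c i) := by
    rw [Real.log_prod fun i _ => (pow_pos (hc i) _).ne', Finset.mul_sum]
    exact Finset.sum_congr rfl fun i _ => by rw [Real.log_pow, Nat.cast_mul, mul_assoc]
  rw [Real.log_mul (by exact_mod_cast (Nat.multinomial_pos _ _).ne')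
    (Finset.prod_pos fun i _ => pow_pos (hc i) _).ne', hprod, add_div, mul_div_cancel_left₀ _ hk',
    add_comm]

theorem exists_mul_lt_log_multinomial_mul_prod_pow {c : ι → ℝ} (hc : ∀ i, 0 < c i) {w : ι → ℚ}
    (hw : 0 ≤ w) (hw1 : ∑ i, w i = 1) {T : ℝ} (hT : T < gibbsFunctional c fun i => w i) :
    ∃ n : ι → ℕ, 0 < ∑ i, n i ∧ (∀ i, (n i : ℚ) = (∑ i, n i : ℕ) * w i) ∧
      T * (∑ i, n i : ℕ) < Real.log (Nat.multinomial Finset.univ n * ∏ i, c i ^ n i) := by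
  obtain ⟨D, hD, n, hn⟩ := exists_nat_eq_mul_of_rat_nonneg hw
  have hsum : ∑ i, n i = D := by
    have : ∑ i, (n i : ℚ) = D := by simp_rw [hn, ← Finset.mul_sum, hw1, mul_one]
    exact_mod_cast this
  have hrate : gibbsFunctional c (fun i => n i) - Real.negMulLog (∑ i, n i : ℕ) =
      D * gibbsFunctional c fun i => w i := by
    have hnw : (fun i => (n i : ℝ)) = fun i => D * (w i : ℝ) := funext fun i => by
      exact_mod_cast congrArg (Rat.cast (K := ℝ)) (hn i)
    have hw1' : ∑ i, (w i : ℝ) = 1 := by exact_mod_cast hw1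
    rw [hnw, hsum, gibbsFunctional_const_mul, hw1', one_mul, add_sub_cancel_right]
  have hlim := tendsto_log_multinomial_mul_prod_pow_div hc n
  rw [hrate] at hlim
  have hTD : T * D < D * gibbsFunctional c fun i => w i := by
    rw [mul_comm T]
    exact mul_lt_mul_of_pos_left hT (Nat.cast_pos.2 hD)
  obtain ⟨k, hk, hk0⟩ := ((hlim.eventually_const_lt hTD).and (eventually_gt_atTop 0)).exists
  have hksum : ∑ i, k * n i = k * D := by rw [← Finset.mul_sum, hsum]
  refine ⟨fun i => k * n i, hksum ▸ Nat.mul_pos hk0 hD, fun i => ?_, ?_⟩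
  · rw [hksum, Nat.cast_mul, Nat.cast_mul, hn, mul_assoc]
  · rw [lt_div_iff₀ (Nat.cast_pos.2 hk0)] at hk
    rw [hksum, Nat.cast_mul, mul_comm (k : ℝ), ← mul_assoc]
    exact hk

end Entropy

section NonnegCoeff

variable {σ 𝕜 : Type*} [CommSemiring 𝕜] [PartialOrder 𝕜] [IsOrderedRing 𝕜]
  {P Q R : MvPolynomial σ 𝕜} {x : σ → 𝕜}

theorem coeff_pow_nonneg (hR : ∀ d, 0 ≤ R.coeff d) (ℓ : ℕ) (d : σ →₀ ℕ) :
    0 ≤ (R ^ ℓ).coeff d := by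
  classical
  induction ℓ generalizing d with
  | zero => rw [pow_zero, coeff_one]; split_ifs <;> simp
  | succ k ih =>
    rw [pow_succ, coeff_mul]
    exact Finset.sum_nonneg fun x _ => mul_nonneg (ih _) (hR _)

theorem coeff_mul_coeff_le_coeff_mul (hP : ∀ d, 0 ≤ P.coeff d) (hQ : ∀ d, 0 ≤ Q.coeff d)
    (u v : σ →₀ ℕ) : P.coeff u * Q.coeff v ≤ (P * Q).coeff (u + v) := by
  classical
  rw [coeff_mul]
  exact Finset.single_le_sum (f := fun x : (σ →₀ ℕ) × (σ →₀ ℕ) => P.coeff x.1 * Q.coeff x.2)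
    (fun x _ => mul_nonneg (hP _) (hQ _)) (a := (u, v))
    (Finset.HasAntidiagonal.mem_antidiagonal.2 rfl)

theorem coeff_pow_mul_coeff_pow_le (hR : ∀ d, 0 ≤ R.coeff d) (a b : ℕ) (u v : σ →₀ ℕ) :
    (R ^ a).coeff u * (R ^ b).coeff v ≤ (R ^ (a + b)).coeff (u + v) :=
  pow_add R a b ▸ coeff_mul_coeff_le_coeff_mul (coeff_pow_nonneg hR a) (coeff_pow_nonneg hR b) u v

theorem multinomial_mul_prod_pow_le_coeff_sum_monomial_pow {ι : Type*} [Fintype ι]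
    {c : ι → 𝕜} (hc : ∀ i, 0 ≤ c i) (e : ι → σ →₀ ℕ) (n : ι → ℕ) :
    (Nat.multinomial Finset.univ n : 𝕜) * ∏ i, c i ^ n i ≤
      ((∑ i, monomial (e i) (c i)) ^ ∑ i, n i).coeff (∑ i, n i • e i) := by
  classical
  have hterm : ∀ k : ι → ℕ, (Nat.multinomial Finset.univ k : MvPolynomial σ 𝕜) *
      ∏ i, monomial (e i) (c i) ^ k i =
      monomial (∑ i, k i • e i) ((Nat.multinomial Finset.univ k : 𝕜) * ∏ i, c i ^ k i) := by
    intro k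
    simp_rw [monomial_pow]
    rw [← C_mul_monomial, monomial_sum_prod, C_eq_coe_nat]
  have hterm_nonneg : ∀ k : ι → ℕ, 0 ≤ coeff (∑ i, n i • e i) (monomial (∑ i, k i • e i)
      ((Nat.multinomial Finset.univ k : 𝕜) * ∏ i, c i ^ k i)) := fun k => by
    rw [coeff_monomial]
    split_ifs
    · exact mul_nonneg (Nat.cast_nonneg _) (Finset.prod_nonneg fun i _ => pow_nonneg (hc i) _)
    · exact le_rfl
  simp_rw [Finset.sum_pow_eq_sum_piAntidiag, hterm, coeff_sum]
  refine le_trans (by rw [coeff_monomial, if_pos rfl])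
    (Finset.single_le_sum (fun k _ => hterm_nonneg k) (a := n) (by simp))

theorem coeff_pderiv_nonneg (hR : ∀ d, 0 ≤ R.coeff d) (r : σ) (d : σ →₀ ℕ) :
    0 ≤ (pderiv r R).coeff d := by
  rw [coeff_pderiv]
  exact mul_nonneg (hR _) (add_nonneg (Nat.cast_nonneg _) zero_le_one)

theorem eval_nonneg_of_coeff_nonneg (hR : ∀ d, 0 ≤ R.coeff d) (hx : ∀ r, 0 ≤ x r) :
    0 ≤ eval x R := by
  rw [eval_eq]
  exact Finset.sum_nonneg fun d _ =>
    mul_nonneg (hR d) (Finset.prod_nonneg fun r _ => pow_nonneg (hx r) _)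

theorem eval_pos_of_coeff_nonneg {𝕜 : Type*} [CommSemiring 𝕜] [PartialOrder 𝕜]
    [IsStrictOrderedRing 𝕜] {R : MvPolynomial σ 𝕜} {x : σ → 𝕜} (hR : ∀ d, 0 ≤ R.coeff d)
    (hR0 : R ≠ 0) (hx : ∀ r, 0 < x r) : 0 < eval x R := by
  rw [eval_eq]
  exact Finset.sum_pos (fun d hd => mul_pos ((hR d).lt_of_ne' (mem_support_iff.1 hd))
    (Finset.prod_pos fun r _ => pow_pos (hx r) _)) (support_nonempty.2 hR0)

variable [Fintype σ]

theorem coeff_mul_prod_pow_le_eval (hP : ∀ d, 0 ≤ P.coeff d) (hx : ∀ r, 0 ≤ x r) (v : σ →₀ ℕ) :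
    P.coeff v * ∏ r, x r ^ v r ≤ eval x P := by
  have hterm : ∀ d, 0 ≤ P.coeff d * ∏ r, x r ^ d r := fun d =>
    mul_nonneg (hP d) (Finset.prod_nonneg fun r _ => pow_nonneg (hx r) _)
  rw [eval_eq']
  by_cases hv : v ∈ P.support
  · exact Finset.single_le_sum (f := fun d => P.coeff d * ∏ r, x r ^ d r) (fun d _ => hterm d) hv
  · rw [notMem_support_iff.1 hv, zero_mul]
    exact Finset.sum_nonneg fun d _ => hterm d

end NonnegCoeff

section LogCoeff

variable {σ : Type*} [Fintype σ] {P : MvPolynomial σ ℝ} {x : σ → ℝ}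

theorem log_mul_prod_pow {a : ℝ} (ha : 0 < a) (hx : ∀ r, 0 < x r) (v : σ → ℕ) :
    Real.log (a * ∏ r, x r ^ v r) = Real.log a + ∑ r, v r * Real.log (x r) := by
  have hpow : ∀ r, 0 < x r ^ v r := fun r => pow_pos (hx r) _
  rw [Real.log_mul ha.ne' (Finset.prod_pos fun r _ => hpow r).ne',
    Real.log_prod fun r _ => (hpow r).ne']
  simp_rw [Real.log_pow]

theorem log_coeff_le_log_eval_sub (hP : ∀ d, 0 ≤ P.coeff d) (hx : ∀ r, 0 < x r) {v : σ →₀ ℕ}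
    (hv : 0 < P.coeff v) :
    Real.log (P.coeff v) ≤ Real.log (eval x P) - ∑ r, v r * Real.log (x r) := by
  rw [le_sub_iff_add_le, ← log_mul_prod_pow hv hx]
  exact Real.log_le_log (mul_pos hv (Finset.prod_pos fun r _ => pow_pos (hx r) _))
    (coeff_mul_prod_pow_le_eval hP (fun r => (hx r).le) v)

theorem exists_mul_lt_log_coeff_sum_monomial_pow {σ ι : Type*} [Fintype ι] {c p : ι → ℝ}
    (hc : ∀ i, 0 < c i) (hp : 0 ≤ p) (hp1 : ∑ i, p i = 1) {e : ι → σ →₀ ℕ} {ξ : σ → ℚ}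
    (hmean : ∀ r, ∑ i, p i * e i r = ξ r) {T : ℝ} (hT : T < gibbsFunctional c p) :
    ∃ (m : ℕ) (v : σ →₀ ℕ), 0 < m ∧ (∀ r, (v r : ℚ) = m * ξ r) ∧
      0 < ((∑ i, monomial (e i) (c i)) ^ m).coeff v ∧
      T * m < Real.log (((∑ i, monomial (e i) (c i)) ^ m).coeff v) := by
  obtain ⟨w, hw, hTw, hlin⟩ := exists_rat_mem_nhds_of_nonneg hp
    ((continuous_gibbsFunctional c).continuousAt.eventually_const_lt hT)
  have hw1 : ∑ i, w i = 1 := by simpa using hlin 1 1 (by simpa using hp1)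
  have hwmean : ∀ r, ∑ i, (e i r : ℚ) * w i = ξ r := fun r =>
    hlin (fun i => e i r) (ξ r) (by simpa [mul_comm] using hmean r)
  obtain ⟨n, hn0, hn, hTn⟩ := exists_mul_lt_log_multinomial_mul_prod_pow hc hw hw1 hTw
  have hterm_pos : 0 < (Nat.multinomial Finset.univ n : ℝ) * ∏ i, c i ^ n i :=
    mul_pos (Nat.cast_pos.2 (Nat.multinomial_pos _ _))
      (Finset.prod_pos fun i _ => pow_pos (hc i) _)
  have hterm_le := multinomial_mul_prod_pow_le_coeff_sum_monomial_pow (fun i => (hc i).le) e n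
  refine ⟨∑ i, n i, ∑ i, n i • e i, hn0, fun r => ?_, hterm_pos.trans_le hterm_le,
    hTn.trans_le (Real.log_le_log hterm_pos hterm_le)⟩
  rw [← hwmean r, Finsupp.finsetSum_apply, Nat.cast_sum, Finset.mul_sum]
  refine Finset.sum_congr rfl fun i _ => ?_
  rw [Finsupp.smul_apply, smul_eq_mul, Nat.cast_mul, hn i]
  ring

end LogCoeff

section TiltedWeight

variable {σ : Type*} [Fintype σ] {R : MvPolynomial σ ℝ} {x : σ → ℝ}

/-- The share of the monomial with exponent `d` in the value `R(x)`. When `R` has nonnegative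
coefficients and `x` is positive, these are the probabilities of the law with generating function
`y ↦ R(x y) / R(x)`; the critical equations say that its mean is `ξ`. -/
noncomputable def tiltedWeight (R : MvPolynomial σ ℝ) (x : σ → ℝ) (d : σ →₀ ℕ) : ℝ :=
  R.coeff d * (∏ r, x r ^ d r) / eval x R

theorem tiltedWeight_nonneg (hR : ∀ d, 0 ≤ R.coeff d) (hx : ∀ r, 0 ≤ x r) (d : σ →₀ ℕ) :
    0 ≤ tiltedWeight R x d :=
  div_nonneg (mul_nonneg (hR d) (Finset.prod_nonneg fun r _ => pow_nonneg (hx r) _))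
    (eval_nonneg_of_coeff_nonneg hR hx)

theorem sum_tiltedWeight (h : eval x R ≠ 0) : ∑ d ∈ R.support, tiltedWeight R x d = 1 := by
  simp_rw [tiltedWeight]
  rw [← Finset.sum_div, ← eval_eq', div_self h]

theorem mul_eval_pderiv {A : Type*} [CommSemiring A] (R : MvPolynomial σ A) (x : σ → A) (r : σ) :
    x r * eval x (pderiv r R) = ∑ d ∈ R.support, R.coeff d * (∏ i, x i ^ d i) * d r := by
  have h : X r * pderiv r R = ∑ d ∈ R.support, d r • monomial d (R.coeff d) := by
    conv_lhs => rw [R.as_sum, map_sum, Finset.mul_sum]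
    exact Finset.sum_congr rfl fun d _ => X_mul_pderiv_monomial
  calc x r * eval x (pderiv r R) = eval x (X r * pderiv r R) := by rw [map_mul, eval_X]
    _ = _ := by
      simp_rw [h, map_sum, map_nsmul, eval_monomial, Finsupp.prod_fintype _ _ fun _ => pow_zero _,
        nsmul_eq_mul, mul_comm]

theorem sum_tiltedWeight_mul_apply (R : MvPolynomial σ ℝ) (x : σ → ℝ) (r : σ) :
    ∑ d ∈ R.support, tiltedWeight R x d * d r = x r * eval x (pderiv r R) / eval x R := by
  simp_rw [tiltedWeight, div_mul_eq_mul_div, mul_eval_pderiv, Finset.sum_div]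

theorem gibbsFunctional_tiltedWeight (hR : ∀ d, 0 ≤ R.coeff d) (hx : ∀ r, 0 < x r)
    (hE : 0 < eval x R) :
    gibbsFunctional (fun d : R.support => R.coeff d) (fun d => tiltedWeight R x d) =
      Real.log (eval x R) - ∑ r, x r * eval x (pderiv r R) / eval x R * Real.log (x r) := by
  have hlog : ∀ d ∈ R.support, Real.log (tiltedWeight R x d) =
      Real.log (R.coeff d) + ∑ r, d r * Real.log (x r) - Real.log (eval x R) := fun d hd => by
    have hc : 0 < R.coeff d := (hR d).lt_of_ne' (mem_support_iff.1 hd)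
    rw [tiltedWeight, Real.log_div (mul_pos hc (Finset.prod_pos fun r _ => pow_pos (hx r) _)).ne'
      hE.ne', log_mul_prod_pow hc hx]
  calc gibbsFunctional (fun d : R.support => R.coeff d) (fun d => tiltedWeight R x d)
      = ∑ d ∈ R.support,
          (tiltedWeight R x d * Real.log (R.coeff d) + Real.negMulLog (tiltedWeight R x d)) :=
        Finset.sum_coe_sort R.support fun d =>
          tiltedWeight R x d * Real.log (R.coeff d) + Real.negMulLog (tiltedWeight R x d)
    _ = ∑ d ∈ R.support, (tiltedWeight R x d * Real.log (eval x R) -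
          ∑ r, tiltedWeight R x d * d r * Real.log (x r)) := by
        refine Finset.sum_congr rfl fun d hd => ?_
        simp_rw [Real.negMulLog, hlog d hd, mul_assoc, ← Finset.mul_sum]
        ring
    _ = _ := by
        rw [Finset.sum_sub_distrib, ← Finset.sum_mul, sum_tiltedWeight hE.ne', one_mul,
          Finset.sum_comm]
        simp_rw [← Finset.sum_mul, sum_tiltedWeight_mul_apply]

end TiltedWeight

section PositivePowers

variable {σ : Type*}

/-- The exponent `ℓ ξ`, meaningful only when all `ℓ * ξ r` are natural numbers. -/
noncomputable def scaledExponent [Finite σ] (ξ : σ → ℚ) (ℓ : ℕ) : σ →₀ ℕ :=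
  Finsupp.equivFunOnFinite.symm fun r => ((ℓ : ℚ) * ξ r).num.toNat

/-- The set `L` of positive `ℓ` such that `ℓ ξ` is integral and occurs in `R ^ ℓ` with positive
coefficient. -/
def positivePowers [Finite σ] (R : MvPolynomial σ ℝ) (ξ : σ → ℚ) : Set ℕ :=
  {ℓ | 0 < ℓ ∧ (∀ r, ((ℓ : ℚ) * ξ r).den = 1) ∧ 0 < (R ^ ℓ).coeff (scaledExponent ξ ℓ)}

theorem scaledExponent_eq [Finite σ] {ξ : σ → ℚ} {ℓ : ℕ} {v : σ →₀ ℕ}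
    (hv : ∀ r, (v r : ℚ) = ℓ * ξ r) : scaledExponent ξ ℓ = v :=
  Finsupp.ext fun r => by simp [scaledExponent, ← hv r]

theorem mem_positivePowers_of_eq [Finite σ] {R : MvPolynomial σ ℝ} {ξ : σ → ℚ} {ℓ : ℕ}
    {v : σ →₀ ℕ} (hℓ : 0 < ℓ) (hv : ∀ r, (v r : ℚ) = ℓ * ξ r) (hpos : 0 < (R ^ ℓ).coeff v) :
    ℓ ∈ positivePowers R ξ :=
  ⟨hℓ, fun r => by rw [← hv r, Rat.den_natCast], by rwa [scaledExponent_eq hv]⟩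

theorem scaledExponent_apply [Finite σ] {ξ : σ → ℚ} {ℓ : ℕ} {r : σ} (hξ : 0 ≤ ξ r)
    (hden : ((ℓ : ℚ) * ξ r).den = 1) : (scaledExponent ξ ℓ r : ℚ) = ℓ * ξ r := by
  have hnum : 0 ≤ ((ℓ : ℚ) * ξ r).num := Rat.num_nonneg.2 (mul_nonneg ℓ.cast_nonneg hξ)
  calc ((((ℓ : ℚ) * ξ r).num.toNat : ℕ) : ℚ) = ((((ℓ : ℚ) * ξ r).num.toNat : ℤ) : ℚ) :=
        (Int.cast_natCast _).symm
    _ = ℓ * ξ r := by rw [Int.toNat_of_nonneg hnum, Rat.coe_int_num_of_den_eq_one hden]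

section Superadditive

variable [Finite σ] {R : MvPolynomial σ ℝ} {ξ : σ → ℚ} {a b : ℕ}

theorem scaledExponent_add_apply (hξ : 0 ≤ ξ) (ha : a ∈ positivePowers R ξ)
    (hb : b ∈ positivePowers R ξ) (r : σ) :
    ((scaledExponent ξ a + scaledExponent ξ b) r : ℚ) = (a + b : ℕ) * ξ r := by
  rw [Finsupp.add_apply, Nat.cast_add, scaledExponent_apply (hξ r) (ha.2.1 r),
    scaledExponent_apply (hξ r) (hb.2.1 r), Nat.cast_add, add_mul]

theorem add_mem_positivePowers (hR : ∀ d, 0 ≤ R.coeff d) (hξ : 0 ≤ ξ)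
    (ha : a ∈ positivePowers R ξ) (hb : b ∈ positivePowers R ξ) : a + b ∈ positivePowers R ξ :=
  mem_positivePowers_of_eq (Nat.add_pos_left ha.1 b) (scaledExponent_add_apply hξ ha hb)
    ((mul_pos ha.2.2 hb.2.2).trans_le (coeff_pow_mul_coeff_pow_le hR a b _ _))

theorem log_coeff_pow_add_le (hR : ∀ d, 0 ≤ R.coeff d) (hξ : 0 ≤ ξ)
    (ha : a ∈ positivePowers R ξ) (hb : b ∈ positivePowers R ξ) :
    Real.log ((R ^ a).coeff (scaledExponent ξ a)) + Real.log ((R ^ b).coeff (scaledExponent ξ b)) ≤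
      Real.log ((R ^ (a + b)).coeff (scaledExponent ξ (a + b))) := by
  rw [← Real.log_mul ha.2.2.ne' hb.2.2.ne', scaledExponent_eq (scaledExponent_add_apply hξ ha hb)]
  exact Real.log_le_log (mul_pos ha.2.2 hb.2.2) (coeff_pow_mul_coeff_pow_le hR a b _ _)

end Superadditive

variable [Fintype σ] {R : MvPolynomial σ ℝ} {ξ : σ → ℚ} {x : σ → ℝ}

theorem log_coeff_pow_scaledExponent_le (hR : ∀ d, 0 ≤ R.coeff d) (hξ : 0 ≤ ξ)
    (hx : ∀ r, 0 < x r) {ℓ : ℕ} (hℓ : ℓ ∈ positivePowers R ξ) :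
    Real.log ((R ^ ℓ).coeff (scaledExponent ξ ℓ)) ≤
      (Real.log (eval x R) - ∑ r, (ξ r : ℝ) * Real.log (x r)) * ℓ := by
  have hexp : ∀ r, (scaledExponent ξ ℓ r : ℝ) = ℓ * ξ r := fun r => by
    exact_mod_cast congrArg (Rat.cast (K := ℝ)) (scaledExponent_apply (hξ r) (hℓ.2.1 r))
  refine (log_coeff_le_log_eval_sub (coeff_pow_nonneg hR ℓ) hx hℓ.2.2).trans_eq ?_
  simp_rw [hexp, map_pow, Real.log_pow, mul_assoc, ← Finset.mul_sum]
  ring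

theorem exists_mem_positivePowers_mul_lt (hR : ∀ d, 0 ≤ R.coeff d) (hx : ∀ r, 0 < x r)
    (hE : 0 < eval x R) (heq : ∀ r, x r * eval x (pderiv r R) = ξ r * eval x R) {T : ℝ}
    (hT : T < Real.log (eval x R) - ∑ r, (ξ r : ℝ) * Real.log (x r)) :
    ∃ m ∈ positivePowers R ξ, T * m < Real.log ((R ^ m).coeff (scaledExponent ξ m)) := by
  have hmean : ∀ r, x r * eval x (pderiv r R) / eval x R = ξ r := fun r => by
    rw [heq, mul_div_cancel_right₀ _ hE.ne']
  have hsum : ∑ d : R.support, monomial (d : σ →₀ ℕ) (R.coeff d) = R := by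
    rw [Finset.sum_coe_sort R.support fun d => monomial d (R.coeff d), support_sum_monomial_coeff]
  obtain ⟨m, v, hm, hv, hpos, hlt⟩ := exists_mul_lt_log_coeff_sum_monomial_pow
    (c := fun d : R.support => R.coeff d) (p := fun d => tiltedWeight R x d)
    (e := fun d => d) (ξ := ξ) (T := T)
    (fun d => (hR d).lt_of_ne' (mem_support_iff.1 d.2))
    (fun d => tiltedWeight_nonneg hR (fun r => (hx r).le) d)
    ((Finset.sum_coe_sort R.support (tiltedWeight R x)).trans (sum_tiltedWeight hE.ne'))
    (fun r => by
      rw [Finset.sum_coe_sort R.support fun d => tiltedWeight R x d * d r,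
        sum_tiltedWeight_mul_apply, hmean])
    (by simpa only [gibbsFunctional_tiltedWeight hR hx hE, hmean] using hT)
  rw [hsum] at hpos hlt
  exact ⟨m, mem_positivePowers_of_eq hm hv hpos, by rwa [scaledExponent_eq hv]⟩

theorem isLUB_log_coeff_pow_div (hR : ∀ d, 0 ≤ R.coeff d) (hξ : 0 ≤ ξ) (hx : ∀ r, 0 < x r)
    (hE : 0 < eval x R) (heq : ∀ r, x r * eval x (pderiv r R) = ξ r * eval x R) :
    IsLUB ((fun ℓ : ℕ => Real.log ((R ^ ℓ).coeff (scaledExponent ξ ℓ)) / ℓ) '' positivePowers R ξ)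
      (Real.log (eval x R) - ∑ r, (ξ r : ℝ) * Real.log (x r)) := by
  refine ⟨?_, fun B hB => le_of_forall_lt fun T hT => ?_⟩
  · rintro _ ⟨ℓ, hℓ, rfl⟩
    exact (div_le_iff₀ (Nat.cast_pos.2 hℓ.1)).2 (log_coeff_pow_scaledExponent_le hR hξ hx hℓ)
  · obtain ⟨m, hm, hlt⟩ := exists_mem_positivePowers_mul_lt hR hx hE heq hT
    exact ((lt_div_iff₀ (Nat.cast_pos.2 hm.1)).2 hlt).trans_le (hB ⟨m, hm, rfl⟩)

end PositivePowers

theorem stmt_5_general {σ : Type*} [Fintype σ] {R : MvPolynomial σ ℝ}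
    (hR : ∀ d, 0 ≤ R.coeff d) {ξ : σ → ℚ} (hne : (positivePowers R ξ).Nonempty)
    {x : σ → ℝ} (hx : ∀ r, 0 < x r)
    (heq : ∀ r, x r * eval x (pderiv r R) = ξ r * eval x R) :
    Tendsto (fun ℓ : ℕ => (1 / ℓ : ℝ) * Real.log ((R ^ ℓ).coeff (scaledExponent ξ ℓ)))
      (atTop ⊓ 𝓟 (positivePowers R ξ))
      (𝓝 (Real.log (eval x R) - ∑ r, (ξ r : ℝ) * Real.log (x r))) := by
  have hR0 : R ≠ 0 := by
    rintro rfl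
    obtain ⟨ℓ, hℓ, -, hpos⟩ := hne
    simp [zero_pow hℓ.ne'] at hpos
  have hE : 0 < eval x R := eval_pos_of_coeff_nonneg hR hR0 hx
  have hξ : 0 ≤ ξ := fun r => by
    have hmean : 0 ≤ (ξ r : ℝ) * eval x R :=
      heq r ▸ mul_nonneg (hx r).le
        (eval_nonneg_of_coeff_nonneg (coeff_pderiv_nonneg hR r) fun r => (hx r).le)
    exact Rat.cast_nonneg.1 (nonneg_of_mul_nonneg_left hmean hE)
  simp_rw [one_div_mul_eq_div]
  exact tendsto_div_of_superadditiveOn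
    (u := fun ℓ => Real.log ((R ^ ℓ).coeff (scaledExponent ξ ℓ))) (fun h0 => h0.1.ne rfl)
    (fun _ ha _ hb => add_mem_positivePowers hR hξ ha hb)
    (fun _ ha _ hb => log_coeff_pow_add_le hR hξ ha hb)
    (isLUB_log_coeff_pow_div hR hξ hx hE heq)

/-- Let `R` be a polynomial in `M` variables with nonnegative real
coefficients, `ξ` a vector of positive rationals, and let `L` be the (nonempty)
set of positive integers `ℓ` with `ξ_r ℓ ∈ ℤ` for all `r` and
`Coeff[R^ℓ, x^{ξℓ}] > 0`.  If `x₀` is a strictly positive vector satisfying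
`x₀_r ∂R/∂x_r(x₀) = ξ_r R(x₀)` for all `r`, then `(1/ℓ) log Coeff[R^ℓ, x^{ξℓ}]`
tends, as `ℓ → ∞` along `L`, to `log R(x₀) - ∑_r ξ_r log x₀_r`. -/
theorem stmt_5 (M : ℕ) (hM : 1 ≤ M) (R : MvPolynomial (Fin M) ℝ)
    (hR : ∀ d : Fin M →₀ ℕ, 0 ≤ R.coeff d)
    (ξ : Fin M → ℚ) (hξ : ∀ r, 0 < ξ r)
    (L : Set ℕ)
    (hL : L = {ℓ : ℕ | 0 < ℓ ∧ (∀ r, ((ℓ : ℚ) * ξ r).den = 1) ∧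
      0 < (R ^ ℓ).coeff (Finsupp.equivFunOnFinite.symm fun r => ((ℓ : ℚ) * ξ r).num.toNat)})
    (hLne : L.Nonempty)
    (x0 : Fin M → ℝ) (hx0 : ∀ r, 0 < x0 r)
    (heq : ∀ r, x0 r * MvPolynomial.eval x0 (MvPolynomial.pderiv r R) =
      (ξ r : ℝ) * MvPolynomial.eval x0 R) :
    Filter.Tendsto
      (fun ℓ : ℕ => (1 / ℓ : ℝ) *
        Real.log ((R ^ ℓ).coeff (Finsupp.equivFunOnFinite.symm fun r => ((ℓ : ℚ) * ξ r).num.toNat)))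
      (Filter.atTop ⊓ Filter.principal L)
      (nhds (Real.log (MvPolynomial.eval x0 R) - ∑ r, (ξ r : ℝ) * Real.log (x0 r))) := by
  subst hL
  exact stmt_5_general hR hLne hx0 heq
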